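/- Let n, r ∈ ℕ with r ≥ 3 and r dividing n, and let D ∈ ℕ with n/r ≤ D ≤ n − r. Define f(n,r,D) := min{ C(n/r+1, 2), D + e(\overline{T}(n−D−1, r−2)) }. Then every graph G on n vertices with maximum degree Δ(G) ≤ D and e(G) < f(n,r,D) has an equitable (n/r)-colouring. Moreover, there exists a graph G' on n vertices with Δ(G') ≤ D and e(G') = f(n,r,D) that has no equitable (n/r)-colouring. -/

import Mathlib

/-- The number of edges of a graph. -/
noncomputable def edgeCount {V : Type*} (G : SimpleGraph V) : ℕ := Nat.card G.edgeSet

/-- The degree of a vertex. -/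
noncomputable def deg {V : Type*} (G : SimpleGraph V) (v : V) : ℕ := Nat.card (G.neighborSet v)

/-- An equitable `k`-colouring: a proper colouring with `k` colours whose colour classes
differ in size by at most one. -/
def HasEquitableColoring {n : ℕ} (G : SimpleGraph (Fin n)) (k : ℕ) : Prop :=
  ∃ c : Fin n → Fin k,
    (∀ u v, G.Adj u v → c u ≠ c v) ∧
    ∀ i j : Fin k, (Finset.univ.filter fun v => c v = i).card ≤
      (Finset.univ.filter fun v => c v = j).card + 1

/-- `f(n,r,D)`, where `e(T̄(n-D-1, r-2))` is the number of edges of the complement of the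
Turán graph. -/
noncomputable def fFun (n r D : ℕ) : ℕ :=
  min (Nat.choose (n / r + 1) 2)
    (D + edgeCount ((SimpleGraph.turanGraph (n - D - 1) (r - 2))ᶜ))

/-!
Put `k = n / r` and `s = r - 2`. A proper colouring with `k` classes of size `r` is built greedily:
the class removed first is, among the independent `r`-sets containing a vertex `v` of maximum
degree, one with the largest degree sum. Such sets exist because otherwise the non-neighbours of
`v` induce a graph without an independent set of size `s + 1`, which by Turán's theorem has at least
`e(T̄(n - 1 - deg v, s))` edges, none of them at `v`. By the maximality of the degree sum, deleting
the class preserves, with `k - 1` in place of `k`, both that there are fewer than `C(k + 1, 2)`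
edges and that there are fewer than `deg w + e(T̄(n - 1 - deg w, s))` edges for every vertex `w`.

Sharpness is shown by a `(k + 1)`-clique with isolated vertices and by the disjoint union of a star
with `D` edges and `T̄(n - D - 1, s)`: a colour class containing the centre of the star has at most
`s` further vertices.
-/

open Finset SimpleGraph

section Counting

variable {V W : Type*} {G : SimpleGraph V} {H : SimpleGraph W}

lemma deg_eq_degree (v : V) [Fintype (G.neighborSet v)] : deg G v = G.degree v := by
  rw [deg, Nat.card_eq_fintype_card, card_neighborSet_eq_degree]

lemma edgeCount_eq_card_edgeFinset [Fintype G.edgeSet] : edgeCount G = #G.edgeFinset := by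
  rw [edgeCount, Nat.card_eq_fintype_card, edgeFinset_card]

lemma deg_iso (f : G ≃g H) (v : V) : deg H (f v) = deg G v :=
  (Nat.card_congr (f.mapNeighborSet v)).symm

lemma edgeCount_iso (f : G ≃g H) : edgeCount H = edgeCount G :=
  (Nat.card_congr f.mapEdgeSet).symm

lemma deg_le_of_embedding [Finite W] (f : G ↪g H) (v : V) : deg G v ≤ deg H (f v) :=
  Nat.card_le_card_of_injective _ (f.mapNeighborSet v).injective

lemma edgeCount_le_of_embedding [Finite W] (f : G ↪g H) : edgeCount G ≤ edgeCount H :=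
  Nat.card_le_card_of_injective _ f.mapEdgeSet.injective

lemma deg_sum_inl (v : V) : deg (G ⊕g H) (.inl v) = deg G v := by
  rw [deg, neighborSet_sum_inl, Nat.card_image_of_injective Sum.inl_injective, deg]

lemma deg_sum_inr (w : W) : deg (G ⊕g H) (.inr w) = deg H w := by
  rw [deg, neighborSet_sum_inr, Nat.card_image_of_injective Sum.inr_injective, deg]

lemma edgeCount_sum [Finite V] [Finite W] :
    edgeCount (G ⊕g H) = edgeCount G + edgeCount H := by
  rw [edgeCount, Nat.card_congr edgeSetSumEquiv, Nat.card_sum, edgeCount, edgeCount]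

lemma deg_bot (v : V) : deg (⊥ : SimpleGraph V) v = 0 := by
  simp [deg]

lemma edgeCount_bot : edgeCount (⊥ : SimpleGraph V) = 0 := by
  simp [edgeCount]

lemma edgeCount_top [Finite V] : edgeCount (⊤ : SimpleGraph V) = (Nat.card V).choose 2 := by
  classical
  have := Fintype.ofFinite V
  rw [edgeCount_eq_card_edgeFinset, card_edgeFinset_top_eq_card_choose_two,
    Nat.card_eq_fintype_card]

lemma edgeCount_starGraph [Finite V] (v : V) : edgeCount (starGraph v) + 1 = Nat.card V := by
  classical
  have := Fintype.ofFinite V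
  rw [edgeCount_eq_card_edgeFinset, (isTree_starGraph v).card_edgeFinset,
    Nat.card_eq_fintype_card]

lemma eq_bot_of_edgeCount_eq_zero [Finite V] (h : edgeCount G = 0) : G = ⊥ := by
  rwa [edgeCount, Finite.card_eq_zero_iff, Set.isEmpty_coe_sort, edgeSet_eq_empty] at h

lemma sum_deg_eq_two_mul_edgeCount [Fintype V] (G : SimpleGraph V) :
    ∑ v, deg G v = 2 * edgeCount G := by
  classical
  simp only [deg_eq_degree, edgeCount_eq_card_edgeFinset, sum_degrees_eq_twice_card_edges]

lemma deg_add_deg_compl_add_one [Finite V] (G : SimpleGraph V) (v : V) :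
    deg G v + deg Gᶜ v + 1 = Nat.card V := by
  classical
  have := Fintype.ofFinite V
  have hlt := G.degree_lt_card_verts v
  rw [deg_eq_degree, deg_eq_degree, degree_compl, Nat.card_eq_fintype_card]
  omega

lemma deg_lt_natCard [Finite V] (v : V) : deg G v < Nat.card V := by
  have := deg_add_deg_compl_add_one G v
  omega

lemma deg_induce_lt_deg_of_adj [Finite V] {t : Set V} {w : t} {a : V} (ha : a ∉ t)
    (hadj : G.Adj w a) : deg (G.induce t) w < deg G w := by
  have hsub : Subtype.val '' (G.induce t).neighborSet w ⊂ G.neighborSet w := by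
    refine (Set.ssubset_iff_of_subset ?_).2 ⟨a, hadj, fun ⟨u, _, hu⟩ ↦ ha (hu ▸ u.2)⟩
    rintro _ ⟨u, hu, rfl⟩
    exact hu
  have hlt := Set.ncard_lt_ncard hsub
  rwa [Set.ncard_image_of_injective _ Subtype.val_injective] at hlt

lemma edgeCount_add_edgeCount_compl [Finite V] (G : SimpleGraph V) :
    edgeCount G + edgeCount Gᶜ = (Nat.card V).choose 2 := by
  classical
  have := Fintype.ofFinite V
  rw [← edgeCount_top, ← sup_compl_eq_top (x := G)]
  simp only [edgeCount_eq_card_edgeFinset]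
  rw [edgeFinset_sup, card_union_of_disjoint (disjoint_edgeFinset.2 disjoint_compl_right)]

lemma edgeCount_eq_edgeCount_induce_compl_add_sum_deg [Finite V] {S : Finset V}
    (hS : G.IsIndepSet S) :
    edgeCount G = edgeCount (G.induce (S : Set V)ᶜ) + ∑ v ∈ S, deg G v := by
  classical
  have := Fintype.ofFinite V
  have hinside : edgeCount (G.induce (S : Set V)ᶜ) = #(G.edgeFinset ∩ Sᶜ.sym2) := by
    rw [edgeCount_eq_card_edgeFinset,
      ← card_map (Function.Embedding.subtype (· ∈ (S : Set V)ᶜ)).sym2Map, map_edgeFinset_induce]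
    simp
  have hmeeting : ∑ v ∈ S, deg G v = #(S.biUnion fun v ↦ G.incidenceFinset v) := by
    rw [card_biUnion]
    · simp only [card_incidenceFinset_eq_degree, deg_eq_degree]
    · intro u hu v hv huv
      rw [Function.onFun, ← disjoint_coe, Set.disjoint_iff_inter_eq_empty]
      simpa using G.incidenceSet_inter_incidenceSet_of_not_adj (hS hu hv huv) huv
  have hmeeting_eq : S.biUnion (fun v ↦ G.incidenceFinset v) = G.edgeFinset \ Sᶜ.sym2 := by
    ext e
    simp only [mem_biUnion, mem_incidenceFinset, incidenceSet, Set.mem_ofPred_eq, mem_sdiff,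
      mem_edgeFinset, mem_sym2_iff, mem_compl, not_forall, not_not]
    tauto
  rw [hinside, hmeeting, hmeeting_eq, card_inter_add_card_sdiff, edgeCount_eq_card_edgeFinset]

lemma choose_two_le_edgeCount_of_isClique [Finite V] {t : Set V} (ht : G.IsClique t) :
    (Nat.card t).choose 2 ≤ edgeCount G := by
  rw [← edgeCount_top, ← induce_eq_top.2 ht]
  exact edgeCount_le_of_embedding (Embedding.induce t)

end Counting

section TuranComplement

/-- The number `e(T̄(m, s))` of edges of the complement of the Turán graph with `m` vertices and
`s` classes. -/
noncomputable def turanComplEdges (s m : ℕ) : ℕ := edgeCount (turanGraph m s)ᶜ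

lemma turanComplEdges_of_le {s m : ℕ} (h : m ≤ s) : turanComplEdges s m = 0 := by
  rw [turanComplEdges, turanGraph_eq_top.2 (.inr h), compl_top, edgeCount_bot]

lemma edgeCount_turanGraph_add_turanComplEdges (s m : ℕ) :
    edgeCount (turanGraph m s) + turanComplEdges s m = m.choose 2 := by
  rw [turanComplEdges, edgeCount_add_edgeCount_compl, Nat.card_fin]

lemma turanComplEdges_le_edgeCount {V : Type*} [Finite V] {G : SimpleGraph V} {s : ℕ}
    (hG : G.IndepSetFree (s + 1)) : turanComplEdges s (Nat.card V) ≤ edgeCount G := by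
  classical
  have := Fintype.ofFinite V
  have hturan : edgeCount Gᶜ ≤ edgeCount (turanGraph (Nat.card V) s) := by
    rw [edgeCount_eq_card_edgeFinset, edgeCount_eq_card_edgeFinset, card_edgeFinset_turanGraph,
      Nat.card_eq_fintype_card]
    exact ((cliqueFree_compl G).2 hG).card_edgeFinset_le
  have := edgeCount_turanGraph_add_turanComplEdges s (Nat.card V)
  have := edgeCount_add_edgeCount_compl G
  omega

lemma choose_two_deg_succ_le_turanComplEdges {s m : ℕ} (v : Fin m) :
    (deg (turanGraph m s)ᶜ v + 1).choose 2 ≤ turanComplEdges s m := by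
  have hmod : ∀ u ∈ insert v ((turanGraph m s)ᶜ.neighborSet v), (u : ℕ) % s = v % s := by
    rintro u (rfl | hu)
    · rfl
    · exact (not_not.1 ((compl_adj _ _ _).1 hu).2).symm
  have hclique : (turanGraph m s)ᶜ.IsClique (insert v ((turanGraph m s)ᶜ.neighborSet v)) :=
    fun a ha b hb hab ↦ ⟨hab, fun hadj ↦ hadj ((hmod a ha).trans (hmod b hb).symm)⟩
  have hcard : Nat.card ↥(insert v ((turanGraph m s)ᶜ.neighborSet v)) =
      deg (turanGraph m s)ᶜ v + 1 := by
    rw [Nat.card_coe_set_eq, Set.ncard_insert_of_notMem (by simp)]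
    rfl
  rw [← hcard]
  exact choose_two_le_edgeCount_of_isClique hclique

variable {s : ℕ}

lemma turanComplEdges_add (hs : 0 < s) (m : ℕ) :
    turanComplEdges s (m + s) = turanComplEdges s m + m := by
  have hsmall := edgeCount_turanGraph_add_turanComplEdges s m
  have hlarge := edgeCount_turanGraph_add_turanComplEdges s (m + s)
  have hstep : edgeCount (turanGraph (m + s) s) =
      edgeCount (turanGraph m s) + m * (s - 1) + s.choose 2 := by
    simp only [edgeCount_eq_card_edgeFinset, card_edgeFinset_turanGraph_add]
  have hchoose : (m + s).choose 2 = s.choose 2 + m * s + m.choose 2 := by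
    simp [Nat.add_choose_eq, Finset.Nat.antidiagonal_succ, ← add_assoc]
  have hmul : m * s = m * (s - 1) + m := by
    rw [← Nat.mul_succ, Nat.succ_eq_add_one, Nat.sub_add_cancel hs]
  omega

lemma turanComplEdges_succ (hs : 0 < s) (m : ℕ) :
    turanComplEdges s (m + 1) = turanComplEdges s m + m / s := by
  induction m using Nat.strong_induction_on with
  | _ m ih =>
    obtain hm | ⟨q, rfl⟩ := (lt_or_ge m s).imp_right Nat.exists_eq_add_of_le'
    · rw [turanComplEdges_of_le hm, turanComplEdges_of_le hm.le, Nat.div_eq_of_lt hm]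
    · rw [add_right_comm, turanComplEdges_add hs, turanComplEdges_add hs, ih q (by omega),
        Nat.add_div_right _ hs]
      omega

lemma turanComplEdges_monotone (hs : 0 < s) : Monotone (turanComplEdges s) :=
  monotone_nat_of_le_succ fun m ↦ by rw [turanComplEdges_succ hs]; exact Nat.le_add_right _ _

lemma le_turanComplEdges_add (hs : 0 < s) (m : ℕ) : m ≤ turanComplEdges s m + s := by
  obtain hm | ⟨q, rfl⟩ := (le_total m s).imp_right Nat.exists_eq_add_of_le'
  · omega
  · rw [turanComplEdges_add hs]
    omega

lemma sq_le_two_mul_turanComplEdges_add (hs : 0 < s) (m : ℕ) :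
    m ^ 2 ≤ 2 * s * turanComplEdges s m + s * m := by
  induction m using Nat.strong_induction_on with
  | _ m ih =>
    obtain hm | ⟨q, rfl⟩ := (le_total m s).imp_right Nat.exists_eq_add_of_le'
    · nlinarith
    · rw [turanComplEdges_add hs]
      nlinarith [ih q (by omega)]

lemma add_turanComplEdges_antitone (hs : 0 < s) {n d D : ℕ} (hd : d ≤ D) (hD : D + s + 2 ≤ n) :
    D + turanComplEdges s (n - 1 - D) ≤ d + turanComplEdges s (n - 1 - d) := by
  induction D, hd using Nat.le_induction with
  | base => rfl
  | succ D _ ih =>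
    have hdiv : 1 ≤ (n - 1 - (D + 1)) / s := (Nat.one_le_div_iff hs).2 (by omega)
    have hsucc := turanComplEdges_succ hs (n - 1 - (D + 1))
    rw [show n - 1 - (D + 1) + 1 = n - 1 - D by omega] at hsucc
    have := ih (by omega)
    omega

lemma two_mul_choose_succ_two (k : ℕ) : 2 * (k + 1).choose 2 = k * (k + 1) := by
  have := Nat.add_one_mul_choose_eq k 1
  rw [Nat.choose_one_right] at this
  linarith

lemma choose_two_le_add_turanComplEdges (hs : 0 < s) {j p d : ℕ} (hsum : p + d + 1 = (s + 2) * j)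
    (hd : s * d ≤ (s + 1) * p) : (j + 1).choose 2 ≤ d + turanComplEdges s p := by
  have hchoose := two_mul_choose_succ_two j
  -- For small `j` the linear bound on `turanComplEdges` suffices; beyond `2 * s + 2` the factor
  -- `(s + 1) * j - 6 * s` is nonnegative, which lets the bound on `p` enter the quadratic one.
  obtain hj | hj := le_or_gt j (2 * s + 2)
  · have hj_pos : 0 < j := Nat.pos_of_ne_zero (by rintro rfl; simp at hsum)
    nlinarith [le_turanComplEdges_add hs p]
  · have hp : (s + 1) * j ≤ 2 * p := by
      by_contra! hp
      nlinarith
    have hsq := sq_le_two_mul_turanComplEdges_add hs p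
    have hprod : (s + 1) * j * ((s + 1) * j - 6 * s : ℤ) ≤ 2 * p * (2 * p - 6 * s) := by
      have hp' : ((s + 1) * j : ℤ) ≤ 2 * p := by exact_mod_cast hp
      refine mul_le_mul hp' (by linarith) ?_ (by positivity)
      zify at hs hj
      nlinarith
    zify at *
    refine le_of_mul_le_mul_left (a := (8 * s : ℤ)) ?_ (by positivity)
    nlinarith [mul_nonneg (sq_nonneg (s - 1 : ℤ)) (sq_nonneg (j : ℤ))]

lemma turanComplEdges_add_succ_le (hs : 0 < s) {p d : ℕ} (h : (s + 1) * p < s * d) :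
    turanComplEdges s (p + s + 1) ≤ d + turanComplEdges s p := by
  have hdiv : p / s + p < d := by
    by_contra! hle
    nlinarith [Nat.div_mul_le_self p s]
  rw [add_right_comm, turanComplEdges_add hs, turanComplEdges_succ hs]
  omega

lemma turanComplEdges_add_two_le (hs : 0 < s) {p d : ℕ} (h : (s + 1) * p < s * d) :
    turanComplEdges s (p + s + 2) ≤ (s + 2) * d + turanComplEdges s p := by
  have hlt : p < d := by nlinarith
  have hdiv : (p + 1) / s ≤ p + 1 := Nat.div_le_self _ _
  have hsucc := turanComplEdges_succ hs (p + s + 1)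
  rw [add_right_comm p s 1, Nat.add_div_right _ hs, add_right_comm p 1 s] at hsucc
  have := turanComplEdges_add_succ_le hs h
  nlinarith

end TuranComplement

section HeavyIndepSet

variable {V : Type*} {G : SimpleGraph V} {r s k : ℕ} {S : Finset V} {v : V}

/-- An independent `r`-set suitable as a colour class to be removed first: it contains a vertex of
maximum degree, and none of its vertices can be exchanged for an outside vertex of larger degree
that has no neighbour in it. -/
structure IsHeavyIndepSet (G : SimpleGraph V) (r : ℕ) (S : Finset V) : Prop where
  isNIndepSet : G.IsNIndepSet r S
  exists_mem_forall_deg_le : ∃ v ∈ S, ∀ u, deg G u ≤ deg G v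
  deg_le_of_forall_not_adj : ∀ u ∉ S, (∀ a ∈ S, ¬ G.Adj a u) → ∀ a ∈ S, deg G u ≤ deg G a

lemma edgeCount_induce_compl_neighborSet_add_deg_le [Finite V] (v : V) :
    edgeCount (G.induce (Gᶜ.neighborSet v)) + deg G v ≤ edgeCount G := by
  have hsplit := edgeCount_eq_edgeCount_induce_compl_add_sum_deg (G := G) (S := {v}) (by simp)
  rw [sum_singleton] at hsplit
  have hsub : Gᶜ.neighborSet v ⊆ (({v} : Finset V) : Set V)ᶜ := fun u hu ↦ by
    simpa using (show Gᶜ.Adj v u from hu).ne'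
  have := edgeCount_le_of_embedding (induceHomOfLE G hsub)
  omega

lemma exists_mem_isNIndepSet [Finite V]
    (h : edgeCount G < deg G v + turanComplEdges s (deg Gᶜ v)) :
    ∃ S, v ∈ S ∧ G.IsNIndepSet (s + 2) S := by
  classical
  have hnotFree : ¬ (G.induce (Gᶜ.neighborSet v)).IndepSetFree (s + 1) := fun hfree ↦ by
    have hturan : turanComplEdges s (deg Gᶜ v) ≤ _ := turanComplEdges_le_edgeCount hfree
    have := edgeCount_induce_compl_neighborSet_add_deg_le (G := G) v
    omega
  simp only [IndepSetFree, not_forall, not_not] at hnotFree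
  obtain ⟨T, hT⟩ := hnotFree
  have hT' : Gᶜ.IsNClique (s + 1) (T.map (Function.Embedding.subtype _)) := by
    rw [isNClique_compl, isNIndepSet_iff, card_map]
    refine ⟨?_, hT.card_eq⟩
    rw [coe_map]
    rintro _ ⟨a, ha, rfl⟩ _ ⟨b, hb, rfl⟩ hab
    exact hT.isIndepSet ha hb fun h ↦ hab (congrArg _ h)
  refine ⟨_, mem_insert_self v _, (isNClique_compl G).1 (hT'.insert fun b hb ↦ ?_)⟩
  obtain ⟨b, -, rfl⟩ := mem_map.1 hb
  exact b.2

lemma exists_isHeavyIndepSet [Finite V] (hv : ∀ u, deg G u ≤ deg G v)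
    (h : edgeCount G < deg G v + turanComplEdges s (deg Gᶜ v)) :
    ∃ S, IsHeavyIndepSet G (s + 2) S := by
  classical
  obtain ⟨S, ⟨hvS, hS⟩, hmax⟩ := Set.exists_max_image
    {S : Finset V | v ∈ S ∧ G.IsNIndepSet (s + 2) S} (fun S ↦ ∑ u ∈ S, deg G u)
    (Set.toFinite _) (exists_mem_isNIndepSet h)
  refine ⟨S, hS, ⟨v, hvS, hv⟩, fun u huS hu a ha ↦ ?_⟩
  obtain rfl | hav := eq_or_ne a v
  · exact hv u
  have hswap : G.IsNIndepSet (s + 2) (insert u (S.erase a)) := by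
    rw [← isNClique_compl] at hS ⊢
    refine hS.insert_erase (fun w hw ↦ ?_) ha
    have hwS := (mem_sdiff.1 hw).1
    exact ⟨fun huw ↦ huS (huw ▸ hwS), fun huw ↦ hu w hwS huw.symm⟩
  have hle := hmax _ ⟨mem_insert_of_mem (mem_erase.2 ⟨hav.symm, hvS⟩), hswap⟩
  rw [sum_insert fun h ↦ huS (mem_of_mem_erase h), ← add_sum_erase S _ ha] at hle
  exact Nat.le_of_add_le_add_right hle

lemma card_filter_exists_adj_le [Fintype V] (S : Finset V)
    [DecidablePred fun u ↦ ∃ a ∈ S, G.Adj a u] :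
    #{u | ∃ a ∈ S, G.Adj a u} ≤ ∑ a ∈ S, deg G a := by
  classical
  calc #{u | ∃ a ∈ S, G.Adj a u}
      ≤ #(S.biUnion fun a ↦ G.neighborFinset a) := card_le_card fun u hu ↦ by simpa using hu
    _ ≤ ∑ a ∈ S, #(G.neighborFinset a) := card_biUnion_le
    _ = ∑ a ∈ S, deg G a := by simp only [card_neighborFinset_eq_degree, deg_eq_degree]

lemma IsHeavyIndepSet.mul_add_le_sum_deg (hS : IsHeavyIndepSet G r S) {z w : ℕ}
    (hz : ∀ a ∈ S, z ≤ deg G a) (hw : ∃ u, deg G u = z + w) :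
    r * z + w ≤ ∑ a ∈ S, deg G a := by
  classical
  obtain ⟨v, hvS, hv⟩ := hS.exists_mem_forall_deg_le
  obtain ⟨u, hu⟩ := hw
  rw [← hS.isNIndepSet.card_eq, ← add_sum_erase S _ hvS, ← card_erase_add_one hvS]
  have := card_nsmul_le_sum (S.erase v) (deg G) z fun a ha ↦ hz a (mem_of_mem_erase ha)
  have := hv u
  rw [smul_eq_mul] at *
  linarith

lemma IsHeavyIndepSet.two_mul_edgeCount_le [Finite V] (hS : IsHeavyIndepSet G r S) {a : V}
    (ha : a ∈ S) {w m : ℕ} (hw : ∀ u, deg G u ≤ deg G a + w) (hm : Nat.card V = m + r) :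
    2 * edgeCount G ≤ ∑ b ∈ S, deg G b + m * deg G a + (∑ b ∈ S, deg G b) * w := by
  classical
  have := Fintype.ofFinite V
  have hcard : #Sᶜ = m := by
    rw [card_compl, hS.isNIndepSet.card_eq, ← Nat.card_eq_fintype_card, hm, Nat.add_sub_cancel]
  have hdeg : ∀ u ∈ Sᶜ, deg G u ≤ deg G a + if ∃ b ∈ S, G.Adj b u then w else 0 := by
    intro u hu
    split_ifs with hadj
    · exact hw u
    · push Not at hadj
      exact hS.deg_le_of_forall_not_adj u (mem_compl.1 hu) hadj a ha
  calc 2 * edgeCount G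
      = ∑ b ∈ S, deg G b + ∑ u ∈ Sᶜ, deg G u := by
        rw [← sum_deg_eq_two_mul_edgeCount, sum_add_sum_compl]
    _ ≤ ∑ b ∈ S, deg G b +
          ∑ u ∈ Sᶜ, (deg G a + if ∃ b ∈ S, G.Adj b u then w else 0) := by
        gcongr with u hu
        exact hdeg u hu
    _ = ∑ b ∈ S, deg G b + m * deg G a + #{u ∈ Sᶜ | ∃ b ∈ S, G.Adj b u} * w := by
        rw [sum_add_distrib, ← sum_filter, sum_const, sum_const, hcard, smul_eq_mul, smul_eq_mul,
          add_assoc]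
    _ ≤ ∑ b ∈ S, deg G b + m * deg G a + (∑ b ∈ S, deg G b) * w := by
        gcongr
        exact (card_le_card (filter_subset_filter _ (subset_univ _))).trans
          (card_filter_exists_adj_le S)

/-- If the removed degree sum `X` is at least `k + 1`, this is Pascal's rule. Otherwise the degree
estimates force `2 * e(G) ≤ (k + 1) * X`. -/
lemma IsHeavyIndepSet.edgeCount_induce_compl_lt [Finite V] (hS : IsHeavyIndepSet G r S)
    (hk : 0 < k) (hcard : Nat.card V = r * (k + 1)) (hG : edgeCount G < (k + 2).choose 2) :
    edgeCount (G.induce (S : Set V)ᶜ) < (k + 1).choose 2 := by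
  have hsplit := edgeCount_eq_edgeCount_induce_compl_add_sum_deg hS.isNIndepSet.isIndepSet
  have hpascal : (k + 2).choose 2 = (k + 1) + (k + 1).choose 2 := by
    rw [Nat.choose_succ_succ', Nat.choose_one_right]
  have hchoose := two_mul_choose_succ_two k
  obtain hX | hX := le_or_gt (k + 1) (∑ a ∈ S, deg G a)
  · omega
  obtain ⟨v, hvS, hv⟩ := hS.exists_mem_forall_deg_le
  obtain ⟨a, haS, ha⟩ := exists_min_image S (deg G) ⟨v, hvS⟩
  obtain ⟨w, hw⟩ := Nat.exists_eq_add_of_le (hv a)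
  have hupper := hS.two_mul_edgeCount_le haS (w := w) (m := r * k) (fun u ↦ hw ▸ hv u) hcard
  have hlower := hS.mul_add_le_sum_deg ha ⟨v, hw⟩
  have hedges : 2 * edgeCount G ≤ (k + 1) * ∑ a ∈ S, deg G a := by
    set X := ∑ a ∈ S, deg G a
    calc 2 * edgeCount G
        ≤ X + r * k * deg G a + X * w := hupper
      _ ≤ X + r * k * deg G a + k * w := by gcongr; omega
      _ = X + k * (r * deg G a + w) := by ring
      _ ≤ X + k * X := by gcongr
      _ = (k + 1) * X := by ring
  nlinarith

end HeavyIndepSet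

section UniformColoring

variable {V W : Type*} {G : SimpleGraph V} {H : SimpleGraph W} {r k : ℕ}

/-- `G` has a proper `k`-colouring all of whose colour classes have exactly `r` vertices. For
`r * k` vertices this is the same as an equitable `k`-colouring, but it makes sense over any vertex
type, so it can be passed to induced subgraphs. -/
def HasUniformColoring (G : SimpleGraph V) (k r : ℕ) : Prop :=
  ∃ C : G.Coloring (Fin k), ∀ i, (C.colorClass i).ncard = r

lemma HasUniformColoring.of_iso (f : G ≃g H) (h : HasUniformColoring H k r) :
    HasUniformColoring G k r := by
  obtain ⟨C, hC⟩ := h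
  refine ⟨C.comp f.toHom, fun i ↦ ?_⟩
  rw [← hC i]
  exact Set.ncard_preimage_of_injective_subset_range (s := C.colorClass i) f.injective
    (by simp [f.surjective.range_eq])

lemma HasUniformColoring.colorable (h : HasUniformColoring G k r) : G.Colorable k :=
  ⟨h.choose⟩

lemma HasUniformColoring.exists_mem_isNIndepSet [Finite V] (h : HasUniformColoring G k r) (v : V) :
    ∃ S, v ∈ S ∧ G.IsNIndepSet r S := by
  obtain ⟨C, hC⟩ := h
  have hfin := Set.toFinite (C.colorClass (C v))
  refine ⟨hfin.toFinset, hfin.mem_toFinset.2 (C.mem_colorClass v), ?_, ?_⟩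
  · rw [hfin.coe_toFinset]
    exact C.isIndepSet_colorClass (C v)
  · rw [← Set.ncard_eq_toFinset_card _ hfin, hC]

lemma hasUniformColoring_of_induce_compl {S : Finset V} (hS : G.IsNIndepSet r S)
    (h : HasUniformColoring (G.induce (S : Set V)ᶜ) k r) : HasUniformColoring G (k + 1) r := by
  classical
  obtain ⟨C, hC⟩ := h
  let c : V → Fin (k + 1) := fun v ↦
    if hv : v ∈ S then Fin.last k else (C ⟨v, hv⟩).castSucc
  have hproper : ∀ {u v}, G.Adj u v → c u ≠ c v := by
    intro u v huv
    by_cases hu : u ∈ S <;> by_cases hv : v ∈ S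
    · exact absurd huv (hS.isIndepSet hu hv huv.ne)
    · simpa [c, hu, hv] using (Fin.castSucc_ne_last _).symm
    · simp [c, hu, hv, Fin.castSucc_ne_last]
    · simpa [c, hu, hv] using C.valid (v := ⟨u, hu⟩) (w := ⟨v, hv⟩) huv
  refine ⟨Coloring.mk c hproper, Fin.lastCases ?_ fun i ↦ ?_⟩
  · have hlast : {v | c v = Fin.last k} = (S : Set V) := by
      ext v
      by_cases hv : v ∈ S <;> simp [c, hv, Fin.castSucc_ne_last]
    rw [← hS.card_eq, ← Set.ncard_coe_finset, ← hlast]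
    rfl
  · have hcastSucc : {v | c v = i.castSucc} = Subtype.val '' C.colorClass i := by
      ext v
      by_cases hv : v ∈ S <;> simp [c, hv, Coloring.colorClass, (Fin.castSucc_ne_last _).symm]
    rw [← hC i, ← Set.ncard_image_of_injective _ Subtype.val_injective, ← hcastSucc]
    rfl

lemma sum_card_color_eq {n : ℕ} (c : Fin n → Fin k) : ∑ i, #{v | c v = i} = n := by
  rw [← card_eq_sum_card_fiberwise fun _ _ ↦ by simp, card_univ, Fintype.card_fin]

lemma hasEquitableColoring_iff_hasUniformColoring {n : ℕ} (hn : n = r * k)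
    {G : SimpleGraph (Fin n)} :
    HasEquitableColoring G k ↔ HasUniformColoring G k r := by
  constructor
  · rintro ⟨c, hproper, hequitable⟩
    have hsum : ∑ i, #{v | c v = i} = ∑ _i : Fin k, r := by
      rw [sum_card_color_eq, sum_const, card_univ, Fintype.card_fin, smul_eq_mul, mul_comm, hn]
    have hge : ∀ i, r ≤ #{v | c v = i} := by
      by_contra! ⟨i, hi⟩
      refine hsum.not_lt (sum_lt_sum (fun j _ ↦ ?_) ⟨i, mem_univ i, hi⟩)
      have := hequitable j i
      omega
    refine ⟨Coloring.mk c (hproper _ _), fun i ↦ ?_⟩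
    have hcard := (sum_eq_sum_iff_of_le fun i _ ↦ hge i).1 hsum.symm i (mem_univ i)
    rw [hcard, ← Set.ncard_coe_finset, coe_filter_univ]
    rfl
  · rintro ⟨C, hC⟩
    have hcard : ∀ i, #{v | C v = i} = r := fun i ↦ by
      rw [← hC i, ← Set.ncard_coe_finset, coe_filter_univ]
      rfl
    refine ⟨C, fun u v huv ↦ C.valid huv, fun i j ↦ ?_⟩
    rw [hcard, hcard]
    exact Nat.le_succ r

end UniformColoring

section SparseGraphs

variable {V : Type*} {G : SimpleGraph V} {s k : ℕ} {S : Finset V}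

/-- The invariant of the induction: `G` has `(s + 2) * k` vertices, too few edges for a clique on
`k + 1` vertices, and too few edges for any vertex `v` to be the centre of a star disjoint from
`T̄(m, s)`, where `m`, the degree of `v` in the complement, is the number of its non-neighbours. -/
structure IsEquitablySparse (G : SimpleGraph V) (s k : ℕ) : Prop where
  card_eq : Nat.card V = (s + 2) * k
  edgeCount_lt_choose : edgeCount G < (k + 1).choose 2
  edgeCount_lt_deg_add : ∀ v, edgeCount G < deg G v + turanComplEdges s (deg Gᶜ v)

lemma natCard_compl_of_isNIndepSet [Finite V] {r : ℕ} (hS : G.IsNIndepSet r S)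
    (hcard : Nat.card V = r * (k + 1)) : Nat.card ((S : Set V)ᶜ : Set V) = r * k := by
  have := Set.ncard_add_ncard_compl (S : Set V)
  rw [Set.ncard_coe_finset, hS.card_eq, hcard, mul_add_one] at this
  rw [Nat.card_coe_set_eq]
  omega

lemma IsHeavyIndepSet.mul_deg_le_sum_deg [Finite V] {r : ℕ} (hS : IsHeavyIndepSet G r S)
    {w : ((S : Set V)ᶜ : Set V)} (hw : ∀ u, deg G u ≤ deg (G.induce (S : Set V)ᶜ) w) :
    r * deg (G.induce (S : Set V)ᶜ) w ≤ ∑ a ∈ S, deg G a := by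
  have hdeg_le : deg (G.induce (S : Set V)ᶜ) w ≤ deg G w :=
    deg_le_of_embedding (Embedding.induce _) w
  have hnadj : ∀ a ∈ S, ¬ G.Adj a w := fun a ha hadj ↦
    (deg_induce_lt_deg_of_adj (by simpa using ha) hadj.symm).not_ge (hw w)
  have hle : ∀ a ∈ S, deg (G.induce (S : Set V)ᶜ) w ≤ deg G a := fun a ha ↦
    hdeg_le.trans (hS.deg_le_of_forall_not_adj w w.2 hnadj a ha)
  simpa [hS.isNIndepSet.card_eq] using card_nsmul_le_sum S (deg G) _ hle

/-- For small degrees of `w` the bound follows from the total number of edges, for large ones from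
the corresponding bound at a vertex of maximum degree of `G`, which lies in `S`. -/
lemma IsEquitablySparse.edgeCount_induce_lt_deg_add [Finite V] (hs : 0 < s)
    (hG : IsEquitablySparse G s (k + 1)) (hS : IsHeavyIndepSet G (s + 2) S)
    (hedges : edgeCount (G.induce (S : Set V)ᶜ) < (k + 1).choose 2) (w : ((S : Set V)ᶜ : Set V)) :
    edgeCount (G.induce (S : Set V)ᶜ) < deg (G.induce (S : Set V)ᶜ) w +
      turanComplEdges s (deg (G.induce (S : Set V)ᶜ)ᶜ w) := by
  have hsplit := edgeCount_eq_edgeCount_induce_compl_add_sum_deg hS.isNIndepSet.isIndepSet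
  obtain ⟨v, hvS, hv⟩ := hS.exists_mem_forall_deg_le
  have hvedges := hG.edgeCount_lt_deg_add v
  have hvsum := deg_add_deg_compl_add_one G v
  have hwsum := deg_add_deg_compl_add_one (G.induce (S : Set V)ᶜ) w
  rw [hG.card_eq, mul_add_one] at hvsum
  rw [natCard_compl_of_isNIndepSet hS.isNIndepSet hG.card_eq] at hwsum
  set d := deg (G.induce (S : Set V)ᶜ) w
  set p := deg (G.induce (S : Set V)ᶜ)ᶜ w
  obtain hsmall | hlarge := le_or_gt (s * d) ((s + 1) * p)
  · exact hedges.trans_le (choose_two_le_add_turanComplEdges hs (by omega) hsmall)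
  obtain hlt | hle := lt_or_ge d (deg G v)
  · have hvle : deg G v ≤ ∑ a ∈ S, deg G a := single_le_sum_of_canonicallyOrdered hvS
    have := turanComplEdges_monotone hs (show deg Gᶜ v ≤ p + s + 1 by omega)
    have := turanComplEdges_add_succ_le hs hlarge
    omega
  · have hsum : (s + 2) * d ≤ ∑ a ∈ S, deg G a :=
      hS.mul_deg_le_sum_deg fun u ↦ (hv u).trans hle
    have hdv : d ≤ deg G v := (deg_le_of_embedding (Embedding.induce _) w).trans (hv w)
    have := turanComplEdges_monotone hs (show deg Gᶜ v ≤ p + s + 2 by omega)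
    have := turanComplEdges_add_two_le hs hlarge
    omega

lemma IsEquitablySparse.induce_compl [Finite V] (hs : 0 < s) (hk : 0 < k)
    (hG : IsEquitablySparse G s (k + 1)) (hS : IsHeavyIndepSet G (s + 2) S) :
    IsEquitablySparse (G.induce (S : Set V)ᶜ) s k :=
  have hedges := hS.edgeCount_induce_compl_lt hk hG.card_eq hG.edgeCount_lt_choose
  ⟨natCard_compl_of_isNIndepSet hS.isNIndepSet hG.card_eq, hedges,
    hG.edgeCount_induce_lt_deg_add hs hS hedges⟩

lemma hasUniformColoring_bot_one : HasUniformColoring (⊥ : SimpleGraph V) 1 (Nat.card V) := by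
  refine ⟨Coloring.mk (fun _ ↦ 0) fun h ↦ h.elim, fun i ↦ ?_⟩
  rw [Subsingleton.elim i 0, ← Set.ncard_univ]
  congr 1
  exact Set.eq_univ_of_forall fun _ ↦ rfl

theorem IsEquitablySparse.hasUniformColoring [Finite V] (hs : 0 < s) (hk : 1 ≤ k)
    (hG : IsEquitablySparse G s k) : HasUniformColoring G k (s + 2) := by
  induction k, hk using Nat.le_induction generalizing V with
  | base =>
    have hbot : G = ⊥ := eq_bot_of_edgeCount_eq_zero (by simpa using hG.edgeCount_lt_choose)
    rw [hbot, ← mul_one (s + 2), ← hG.card_eq]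
    exact hasUniformColoring_bot_one
  | succ k hk ih =>
    have : Nonempty V := (Nat.card_pos_iff.1 (by rw [hG.card_eq]; positivity)).1
    obtain ⟨v, hv⟩ := Finite.exists_max (deg G)
    obtain ⟨S, hS⟩ := exists_isHeavyIndepSet hv (hG.edgeCount_lt_deg_add v)
    exact hasUniformColoring_of_induce_compl hS.isNIndepSet (ih (hG.induce_compl hs hk hS))

lemma isEquitablySparse_of_deg_le [Finite V] {n D : ℕ} (hs : 0 < s)
    (hcard : Nat.card V = n) (hn : n = (s + 2) * k) (hD : D + s + 2 ≤ n) (hdeg : ∀ v, deg G v ≤ D)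
    (hedges : edgeCount G < min ((k + 1).choose 2) (D + turanComplEdges s (n - 1 - D))) :
    IsEquitablySparse G s k := by
  rw [lt_min_iff] at hedges
  refine ⟨hcard.trans hn, hedges.1, fun v ↦ hedges.2.trans_le ?_⟩
  have hcompl : deg Gᶜ v = n - 1 - deg G v := by
    have := deg_add_deg_compl_add_one G v
    omega
  rw [hcompl]
  exact add_turanComplEdges_antitone hs (hdeg v) hD

end SparseGraphs

section Extremal

variable {V W : Type*} {G : SimpleGraph V} {H : SimpleGraph W} {n r s k D : ℕ}

lemma exists_fin_of_not_hasUniformColoring [Finite V] (hn : n = r * k) (hcard : Nat.card V = n)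
    (hdeg : ∀ v, deg G v ≤ D) (hG : ¬ HasUniformColoring G k r) :
    ∃ G' : SimpleGraph (Fin n), (∀ v, deg G' v ≤ D) ∧ edgeCount G' = edgeCount G ∧
      ¬ HasEquitableColoring G' k := by
  have := Fintype.ofFinite V
  let f : G ≃g G.overFin (Nat.card_eq_fintype_card.symm.trans hcard) := G.overFinIso _
  refine ⟨_, fun v ↦ ?_, edgeCount_iso f, fun hcolor ↦ hG ?_⟩
  · obtain ⟨u, rfl⟩ := f.surjective v
    exact (deg_iso f u).trans_le (hdeg u)
  · exact .of_iso f ((hasEquitableColoring_iff_hasUniformColoring hn).1 hcolor)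

lemma natCard_le_of_colorable_top (h : (⊤ : SimpleGraph V).Colorable k) : Nat.card V ≤ k :=
  h.card_le_of_pairwise_adj id fun _ _ huv ↦ huv

lemma exists_not_hasEquitableColoring_edgeCount_eq_choose (hn : n = r * k) (hk : k < n)
    (hD : k ≤ D) :
    ∃ G : SimpleGraph (Fin n), (∀ v, deg G v ≤ D) ∧ edgeCount G = (k + 1).choose 2 ∧
      ¬ HasEquitableColoring G k := by
  obtain ⟨m, hm⟩ := Nat.exists_eq_add_of_le (Nat.succ_le_of_lt hk)
  let G := (⊤ : SimpleGraph (Fin (k + 1))) ⊕g (⊥ : SimpleGraph (Fin m))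
  have hdeg : ∀ v, deg G v ≤ D := by
    rintro (u | w)
    · rw [deg_sum_inl]
      exact (Nat.le_of_lt_succ (by simpa using deg_lt_natCard u)).trans hD
    · rw [deg_sum_inr, deg_bot]
      exact Nat.zero_le D
  have hedges : edgeCount G = (k + 1).choose 2 := by
    rw [edgeCount_sum, edgeCount_top, edgeCount_bot, Nat.card_fin, add_zero]
  rw [← hedges]
  refine exists_fin_of_not_hasUniformColoring hn (by simp [hm]) hdeg fun h ↦ ?_
  simpa using natCard_le_of_colorable_top h.colorable.of_sum_left

lemma not_hasUniformColoring_sum_of_isUniversal [Finite V] [Finite W] {v : V}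
    (hv : G.IsUniversal v) (hH : H.IndepSetFree (s + 1)) :
    ¬ HasUniformColoring (G ⊕g H) k (s + 2) := by
  intro h
  obtain ⟨S, hvS, hS⟩ := h.exists_mem_isNIndepSet (.inl v)
  have hleft : S.toLeft ⊆ {v} := fun u hu ↦ by
    by_contra huv
    rw [mem_singleton] at huv
    exact hS.isIndepSet hvS (mem_toLeft.1 hu) (by simpa using Ne.symm huv)
      (sum_adj_inl.2 (hv (Ne.symm huv)))
  have hright : H.IsIndepSet S.toRight := fun a ha b hb hab hadj ↦
    hS.isIndepSet (mem_toRight.1 ha) (mem_toRight.1 hb) (by simpa using hab)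
      (sum_adj_inr.2 hadj)
  have hcard : s + 1 ≤ #S.toRight := by
    have := card_le_card hleft
    have := S.card_toLeft_add_card_toRight
    rw [hS.card_eq] at this
    rw [card_singleton] at *
    omega
  rw [← cliqueFree_compl] at hH
  exact hH.mono hcard _ ((isNClique_compl H).2 ⟨hright, rfl⟩)

lemma exists_not_hasEquitableColoring_edgeCount_eq_add (hs : 0 < s) (hn : n = (s + 2) * k)
    (hD : k ≤ D) (hDn : D < n)
    (hmin : D + turanComplEdges s (n - 1 - D) ≤ (k + 1).choose 2) :
    ∃ G : SimpleGraph (Fin n), (∀ v, deg G v ≤ D) ∧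
      edgeCount G = D + turanComplEdges s (n - 1 - D) ∧ ¬ HasEquitableColoring G k := by
  obtain ⟨m, hm⟩ : ∃ m, n = D + 1 + m := Nat.exists_eq_add_of_le hDn
  rw [show n - 1 - D = m by omega] at *
  let G := starGraph (0 : Fin (D + 1)) ⊕g (turanGraph m s)ᶜ
  have hdeg : ∀ v, deg G v ≤ D := by
    rintro (u | w)
    · rw [deg_sum_inl]
      exact Nat.le_of_lt_succ (by simpa using deg_lt_natCard u)
    · rw [deg_sum_inr]
      by_contra! hlt
      have hk : 0 < k := Nat.pos_of_ne_zero (by rintro rfl; omega)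
      have := choose_two_deg_succ_le_turanComplEdges (s := s) w
      have := Nat.choose_le_choose 2 (show k + 1 ≤ deg (turanGraph m s)ᶜ w + 1 by omega)
      omega
  have hedges : edgeCount G = D + turanComplEdges s m := by
    have := edgeCount_starGraph (0 : Fin (D + 1))
    rw [Nat.card_fin] at this
    rw [edgeCount_sum, turanComplEdges]
    omega
  rw [← hedges]
  refine exists_fin_of_not_hasUniformColoring hn (by simp [hm]) hdeg
    (not_hasUniformColoring_sum_of_isUniversal isUniversal_starGraph_self ?_)
  rw [← cliqueFree_compl, compl_compl]
  exact turanGraph_cliqueFree hs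

end Extremal

/-- Let `r ≥ 3` divide `n` and `n/r ≤ D ≤ n - r`. Every graph on `n` vertices with maximum
degree at most `D` and fewer than `f(n,r,D)` edges has an equitable `n/r`-colouring, and
there is a graph with maximum degree at most `D` and exactly `f(n,r,D)` edges with no
equitable `n/r`-colouring. -/
theorem stmt2 (n r D : ℕ) (hr : 3 ≤ r) (hdvd : r ∣ n) (hn : 0 < n)
    (hD1 : n / r ≤ D) (hD2 : D ≤ n - r) :
    (∀ G : SimpleGraph (Fin n), (∀ v, deg G v ≤ D) →
      edgeCount G < fFun n r D → HasEquitableColoring G (n / r)) ∧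
    (∃ G' : SimpleGraph (Fin n), (∀ v, deg G' v ≤ D) ∧
      edgeCount G' = fFun n r D ∧ ¬ HasEquitableColoring G' (n / r)) := by
  obtain ⟨s, rfl⟩ := Nat.exists_eq_add_of_le' (show 2 ≤ r by omega)
  obtain ⟨k, hnk⟩ := hdvd
  have hk : 0 < k := Nat.pos_of_ne_zero (by rintro rfl; simp_all)
  have hs : 0 < s := by omega
  have hle : s + 2 ≤ n := Nat.le_of_dvd hn ⟨k, hnk⟩
  have hdiv : n / (s + 2) = k := by rw [hnk, Nat.mul_div_cancel_left _ (by omega)]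
  have hf : fFun n (s + 2) D = min ((k + 1).choose 2) (D + turanComplEdges s (n - 1 - D)) := by
    rw [fFun, hdiv, Nat.sub_right_comm]
    rfl
  rw [hdiv] at hD1 ⊢
  rw [hf]
  refine ⟨fun G hdeg hedges ↦ ?_, ?_⟩
  · rw [hasEquitableColoring_iff_hasUniformColoring hnk]
    have hG := isEquitablySparse_of_deg_le hs (Nat.card_fin n) hnk (by omega) hdeg hedges
    exact hG.hasUniformColoring hs hk
  · obtain hmin | hmin := le_total ((k + 1).choose 2) (D + turanComplEdges s (n - 1 - D))
    · rw [min_eq_left hmin]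
      exact exists_not_hasEquitableColoring_edgeCount_eq_choose hnk (by nlinarith) hD1
    · rw [min_eq_right hmin]
      exact exists_not_hasEquitableColoring_edgeCount_eq_add hs hnk hD1 (by omega) hmin
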